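/- Let α < 0 be real, β = 0, c < 0, and let Θ ∈ ℝ, φ ∈ [0, 2π). Then the function u(t,x) = e^{iφ}·√(c/α)·( i·tanh Θ + √3·sech Θ·tanh(√(−c/2)·(x − c·t)·sech Θ) ) (where c/α > 0, so √(c/α) is the positive real square root) is smooth on ℝ×ℝ and satisfies the complex mKdV equation u_t + α·conj(u)·u·u_x + u_xxx = 0 at every point (t,x) ∈ ℝ×ℝ. -/

import Mathlib

/-- Left-hand side of the complex mKdV equation (γ = 1):
`u_t + α·conj(u)·u·u_x + β·u²·conj(u)_x + u_xxx`. -/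
noncomputable def mkdvLHS (α β : ℂ) (u : ℝ → ℝ → ℂ) (t x : ℝ) : ℂ :=
  deriv (fun s => u s x) t
    + α * (starRingEnd ℂ) (u t x) * u t x * deriv (u t) x
    + β * (u t x) ^ 2 * deriv (fun y => (starRingEnd ℂ) (u t y)) x
    + deriv (deriv (deriv (u t))) x

/-- Hyperbolic secant. -/
noncomputable def sech (x : ℝ) : ℝ := 1 / Real.cosh x

theorem tanh_hasDerivAt_aux (y : ℝ) :
    HasDerivAt Real.tanh (1 - Real.tanh y ^ 2) y := by
  have hc : Real.cosh y ≠ 0 := (Real.cosh_pos y).ne'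
  have h := (Real.hasDerivAt_sinh y).div (Real.hasDerivAt_cosh y) hc
  have e : Real.tanh = Real.sinh / Real.cosh := by
    funext z; simp [Real.tanh_eq_sinh_div_cosh]
  rw [← e] at h
  refine h.congr_deriv ?_
  rw [Real.tanh_eq_sinh_div_cosh]
  field_simp

theorem tanh_contDiff_aux : ContDiff ℝ (⊤ : ℕ∞) Real.tanh := by
  have e : Real.tanh = fun z => Real.sinh z / Real.cosh z := by
    funext z; simp [Real.tanh_eq_sinh_div_cosh]
  rw [e]
  exact Real.contDiff_sinh.div Real.contDiff_cosh (fun z => (Real.cosh_pos z).ne')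

/-- the complex kink (kink2) for `α < 0` real, `β = 0`, `c < 0`. -/
theorem stmt11 (α : ℝ) (hα : α < 0) (c : ℝ) (hc : c < 0)
    (Θ φ : ℝ) (hφ : φ ∈ Set.Ico 0 (2 * Real.pi))
    (u : ℝ → ℝ → ℂ)
    (hu : ∀ t x : ℝ, u t x =
      Complex.exp ((φ : ℂ) * Complex.I) * ((Real.sqrt (c / α) : ℝ) : ℂ) *
        (Complex.I * ((Real.tanh Θ : ℝ) : ℂ)
          + ((Real.sqrt 3 * sech Θ
              * Real.tanh (Real.sqrt (-c / 2) * (x - c * t) * sech Θ) : ℝ) : ℂ))) :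
    ContDiff ℝ (⊤ : ℕ∞) (Function.uncurry u)
      ∧ ∀ t x : ℝ, mkdvLHS (α : ℂ) 0 u t x = 0 := by
  set S := sech Θ with hS
  set T := Real.tanh Θ with hT
  set k := Real.sqrt (-c / 2) with hk
  set A := Real.sqrt (c / α) with hA
  set E := Complex.exp ((φ : ℂ) * Complex.I) with hE
  have hk2 : k ^ 2 = -c / 2 := Real.sq_sqrt (by linarith)
  have hA2 : α * A ^ 2 = c := by
    rw [hA, Real.sq_sqrt (div_nonneg_of_nonpos hc.le hα.le)]
    have := hα.ne
    field_simp
  have hTS : T ^ 2 + S ^ 2 = 1 := by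
    have hcp : Real.cosh Θ ≠ 0 := (Real.cosh_pos Θ).ne'
    rw [hT, hS, sech, Real.tanh_eq_sinh_div_cosh]
    field_simp
    linarith [Real.cosh_sq Θ]
  have hEE : (starRingEnd ℂ) E * E = 1 := by
    rw [hE, ← Complex.exp_conj, ← Complex.exp_add]
    simp
  have h3 : Real.sqrt 3 ^ 2 = 3 := Real.sq_sqrt (by norm_num)
  set q := Real.sqrt 3 with hq
  clear_value S T k A E q
  have hun : Function.uncurry u = fun p : ℝ × ℝ =>
      E * (A : ℂ) * (Complex.I * (T : ℂ)
        + ((q * S * Real.tanh (k * (p.2 - c * p.1) * S) : ℝ) : ℂ)) := by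
    funext p
    exact hu p.1 p.2
  refine ⟨?_, ?_⟩
  · rw [hun]
    have h1 : ContDiff ℝ (⊤ : ℕ∞)
        (fun p : ℝ × ℝ => q * S * Real.tanh (k * (p.2 - c * p.1) * S)) :=
      contDiff_const.mul (tanh_contDiff_aux.comp (by fun_prop))
    exact contDiff_const.mul (contDiff_const.add (Complex.ofRealCLM.contDiff.comp h1))
  intro t x
  -- derivatives of the profile
  have hτx : ∀ y : ℝ, HasDerivAt (fun y : ℝ => Real.tanh (k * (y - c * t) * S))
      ((1 - Real.tanh (k * (y - c * t) * S) ^ 2) * (k * S)) y := by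
    intro y
    have hl : HasDerivAt (fun y : ℝ => k * (y - c * t) * S) (k * S) y := by
      simpa using (((hasDerivAt_id y).sub_const (c * t)).const_mul k).mul_const S
    exact (tanh_hasDerivAt_aux _).comp y hl
  have hτt : HasDerivAt (fun s : ℝ => Real.tanh (k * (x - c * s) * S))
      ((1 - Real.tanh (k * (x - c * t) * S) ^ 2) * (-(k * c * S))) t := by
    have hl : HasDerivAt (fun s : ℝ => k * (x - c * s) * S) (-(k * c * S)) t := by
      have := ((((hasDerivAt_id t).const_mul c).const_sub x).const_mul k).mul_const S
      refine this.congr_deriv ?_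
      ring
    exact (tanh_hasDerivAt_aux _).comp t hl
  have hut : deriv (fun s => u s x) t = E * A *
      ((q * S * ((1 - Real.tanh (k * (x - c * t) * S) ^ 2) * (-(k * c * S))) : ℝ) : ℂ) := by
    have e : (fun s => u s x) = fun s => E * (A : ℂ) * (Complex.I * (T : ℂ)
        + ((q * S * Real.tanh (k * (x - c * s) * S) : ℝ) : ℂ)) := by
      funext s; exact hu s x
    rw [e]
    exact (((hτt.const_mul (q * S)).ofReal_comp.const_add _).const_mul _).deriv
  have hux : deriv (u t) = fun y => E * A *
      ((q * S * ((1 - Real.tanh (k * (y - c * t) * S) ^ 2) * (k * S)) : ℝ) : ℂ) := by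
    have e : u t = fun y => E * (A : ℂ) * (Complex.I * (T : ℂ)
        + ((q * S * Real.tanh (k * (y - c * t) * S) : ℝ) : ℂ)) := by
      funext y; exact hu t y
    rw [e]
    funext y
    exact ((((hτx y).const_mul (q * S)).ofReal_comp.const_add _).const_mul _).deriv
  have huxx : deriv (deriv (u t)) = fun y => E * A *
      ((q * S * (-2 * (k * S) ^ 2 * (Real.tanh (k * (y - c * t) * S)
        - Real.tanh (k * (y - c * t) * S) ^ 3)) : ℝ) : ℂ) := by
    rw [hux]
    funext y
    have h := (((((((hτx y).pow 2).const_sub 1).mul_const (k * S)).const_mul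
      (q * S)).ofReal_comp).const_mul (E * A)).deriv
    refine Eq.trans h ?_
    push_cast
    ring
  have huxxx : deriv (deriv (deriv (u t))) x = E * A *
      ((q * S * (-2 * (k * S) ^ 2 * ((1 - 3 * Real.tanh (k * (x - c * t) * S) ^ 2)
        * ((1 - Real.tanh (k * (x - c * t) * S) ^ 2) * (k * S)))) : ℝ) : ℂ) := by
    rw [huxx]
    have h := ((((((hτx x).sub ((hτx x).pow 3)).const_mul (-2 * (k * S) ^ 2)).const_mul
      (q * S)).ofReal_comp).const_mul (E * A)).deriv
    refine Eq.trans h ?_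
    push_cast
    ring
  unfold mkdvLHS
  rw [huxxx, hut, hux, hu t x]
  beta_reduce
  generalize Real.tanh (k * (x - c * t) * S) = τ
  have hN : (α : ℂ) * (starRingEnd ℂ) (E * (A : ℂ) * (Complex.I * (T : ℂ)
        + ((q * S * τ : ℝ) : ℂ))) * (E * (A : ℂ) * (Complex.I * (T : ℂ)
        + ((q * S * τ : ℝ) : ℂ))) = ((c * (T ^ 2 + 3 * S ^ 2 * τ ^ 2) : ℝ) : ℂ) := by
    rw [← hA2, ← h3]
    simp only [map_mul, map_add, Complex.conj_I, Complex.conj_ofReal]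
    push_cast
    linear_combination (α * A ^ 2 * (T ^ 2 + q ^ 2 * S ^ 2 * τ ^ 2) : ℂ) * hEE
      - ((starRingEnd ℂ) E * E * α * A ^ 2 * T ^ 2 : ℂ) * Complex.I_sq
  rw [hN]
  have key : q * S * ((1 - τ ^ 2) * (-(k * c * S)))
      + c * (T ^ 2 + 3 * S ^ 2 * τ ^ 2) * (q * S * ((1 - τ ^ 2) * (k * S)))
      + q * S * (-2 * (k * S) ^ 2 * ((1 - 3 * τ ^ 2) * ((1 - τ ^ 2) * (k * S)))) = 0 := by
    linear_combination (q * S * (1 - τ ^ 2) * k * S * c) * hTS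
      - 2 * S ^ 2 * (1 - 3 * τ ^ 2) * (q * S * (1 - τ ^ 2) * k * S) * hk2
  have keyC := congrArg (fun r : ℝ => (r : ℂ)) key
  push_cast at keyC ⊢
  linear_combination (E * A) * keyC
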